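/- Let Σ₀ ⊆ Σ₁ ⊆ … ⊆ Σ_N be increasingly fine σ-algebras on a countable set Ω, and let πₙ be a probability measure on (Ω,Σₙ) with support Sₙ for each n. Suppose for each n ∈ {0,…,N−1}, (πₙ,πₙ₊₁) satisfies extended Bayesianism and πₙ*(Sₙ₊₁) > 0. Then (πₙ,πₘ) satisfies extended Bayesianism for all 0 ≤ n ≤ m ≤ N. Moreover, there exists a probability measure π̄ on (Ω,Σ_N) such that for all n ≤ N, π̄(Sₙ) > 0 and πₙ(E) = π̄(E ∩ Sₙ)/π̄(Sₙ) for all E ∈ Σₙ. -/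

import Mathlib

open MeasureTheory Set ENNReal

/-- The support of a measure `π` on `(Ω, m)`: the intersection of all `m`-measurable
sets of `π`-measure one. -/
def spt {Ω : Type*} (m : MeasurableSpace Ω) (π : @Measure Ω m) : Set Ω :=
  ⋂₀ {E : Set Ω | @MeasurableSet Ω m E ∧ π E = 1}

/-- The outer measure on richer events induced by a measure `π` on `(Ω, m)`:
`π*(E) = inf {π F : F m-measurable, E ⊆ F}`. -/
noncomputable def outerM {Ω : Type*} (m : MeasurableSpace Ω) (π : @Measure Ω m)
    (E : Set Ω) : ℝ≥0∞ :=
  ⨅ (F : Set Ω) (_ : @MeasurableSet Ω m F ∧ E ⊆ F), π F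

/-- Extended Bayesianism: there is a probability measure `π̄` on the finer σ-algebra `m1`
extending `π₀` (EB1) such that, whenever `π₀*(S₁) > 0`, `π̄(S₁) > 0` and `π₁` is the
conditional of `π̄` on `S₁` (EB2). -/
def ExtendedBayesianism {Ω : Type*} (m0 m1 : MeasurableSpace Ω)
    (π₀ : @Measure Ω m0) (π₁ : @Measure Ω m1) : Prop :=
  ∃ πb : @Measure Ω m1, @IsProbabilityMeasure Ω m1 πb ∧
    (∀ E : Set Ω, @MeasurableSet Ω m0 E → πb E = π₀ E) ∧
    (0 < outerM m0 π₀ (spt m1 π₁) →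
      0 < πb (spt m1 π₁) ∧
      ∀ E : Set Ω, @MeasurableSet Ω m1 E →
        π₁ E = πb (E ∩ spt m1 π₁) / πb (spt m1 π₁))

/-- `π₁` is commensurate to `π₀`: for all `E, F ∈ Σ₀` with `E ⊆ S₁`,
(C1) `π₀ F = 0 → π₁ F = 0` and (C2) `π₀ E * π₁ F ≤ π₁ E * π₀ F`. -/
def Commensurate {Ω : Type*} (m0 m1 : MeasurableSpace Ω)
    (π₀ : @Measure Ω m0) (π₁ : @Measure Ω m1) : Prop :=
  ∀ E F : Set Ω, @MeasurableSet Ω m0 E → @MeasurableSet Ω m0 F → E ⊆ spt m1 π₁ →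
    (π₀ F = 0 → π₁ F = 0) ∧ π₀ E * π₁ F ≤ π₁ E * π₀ F

/-- `π₁` is boundedly commensurate to `π₀`: commensurate, and in addition (C3)
`inf {π₀ F / π₁ F : F ∈ Σ₀, π₁ F > 0} > 0`. -/
def BoundedlyCommensurate {Ω : Type*} (m0 m1 : MeasurableSpace Ω)
    (π₀ : @Measure Ω m0) (π₁ : @Measure Ω m1) : Prop :=
  Commensurate m0 m1 π₀ π₁ ∧
    0 < ⨅ (F : Set Ω) (_ : @MeasurableSet Ω m0 F ∧ 0 < π₁ F), π₀ F / π₁ F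

/-!
Suppose `τ` on `Σₖ` has `πₖ` as its conditional on `Sₖ`, and `ρ` on `Σₖ₊₁` extends `πₖ` and has
`πₖ₊₁` as its conditional on `Sₖ₊₁`. The part of `τ` on `Sₖ` is `τ Sₖ • πₖ`: refine it to
`τ Sₖ • ρ`, and extend the part outside `Sₖ` to `Σₖ₊₁` arbitrarily, for instance by concentrating
the mass of every atom of the countable space at one point. The sum of both extends `τ`, so it keeps
all previous conditionals; and since `ρ Sₖ = 1` forces `Sₖ₊₁ ⊆ Sₖ`, its conditional on
`Sₖ₊₁` is that of `ρ`, namely `πₖ₊₁`. Iterate, starting from `τ = πₙ`.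
-/

/-- `ρ` extends `π` to another σ-algebra: condition (EB1). The inclusion of the σ-algebras is not
part of the definition. -/
def MeasureExtends {Ω : Type*} {m m' : MeasurableSpace Ω} (ρ : Measure[m'] Ω)
    (π : Measure[m] Ω) : Prop :=
  ∀ E : Set Ω, MeasurableSet[m] E → ρ E = π E

/-- `π` is the conditional of `ρ` on the support of `π`, which has positive `ρ`-measure: the
conclusion of condition (EB2), with `π` allowed to live on a smaller σ-algebra than `ρ`. -/
def IsSupportConditional {Ω : Type*} {m m' : MeasurableSpace Ω} (ρ : Measure[m'] Ω)
    (π : Measure[m] Ω) : Prop :=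
  0 < ρ (spt m π) ∧ ∀ E : Set Ω, MeasurableSet[m] E → π E = ρ (E ∩ spt m π) / ρ (spt m π)

section CountableSpace

variable {Ω : Type*} [Countable Ω] {m : MeasurableSpace Ω}

lemma measurableSet_of_measurableAtom_subset {s : Set Ω} (hs : ∀ x ∈ s, measurableAtom x ⊆ s) :
    MeasurableSet s := by
  have hs_eq : s = ⋃ x ∈ s, measurableAtom x :=
    Subset.antisymm (fun _ hx => mem_biUnion hx (mem_measurableAtom_self _)) (iUnion₂_subset hs)
  rw [hs_eq]
  exact .biUnion (to_countable s) fun x _ => .measurableAtom_of_countable x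

lemma measurableSet_spt (π : Measure Ω) : MeasurableSet (spt m π) :=
  measurableSet_of_measurableAtom_subset fun _ hx =>
    subset_sInter fun E hE => measurableAtom_subset hE.1 (hx E hE)

lemma ae_mem_spt (π : Measure Ω) [IsProbabilityMeasure π] : ∀ᵐ x ∂π, x ∈ spt m π := by
  rw [ae_iff_of_countable]
  rintro x hx E ⟨hE, hπE⟩
  by_contra hxE
  exact hx (measure_mono_null (singleton_subset_iff.2 hxE) ((prob_compl_eq_zero_iff hE).2 hπE))

variable (m) in
/-- The map `r` chooses a representative in every atom of the σ-algebra. -/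
lemma exists_measurable_top_preimage_eq :
    ∃ r : Ω → Ω, Measurable[m, ⊤] r ∧ ∀ E : Set Ω, MeasurableSet E → r ⁻¹' E = E := by
  let atom : Ω → Set Ω := measurableAtom
  let r : Ω → Ω := rangeSplitting atom ∘ rangeFactorization atom
  have atom_r (x : Ω) : atom (r x) = atom x := apply_rangeSplitting atom _
  have mem_atom_iff (x y : Ω) : x ∈ atom y ↔ atom x = atom y :=
    ⟨measurableAtom_eq_of_mem, fun h => h ▸ mem_measurableAtom_self x⟩
  refine ⟨r, @measurable_to_countable _ _ ⊤ _ m r fun y => ?_, fun E hE => ?_⟩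
  · have fiber_eq : r ⁻¹' {r y} = atom y := by
      ext x
      rw [mem_atom_iff]
      refine ⟨fun h => ?_, fun h => congrArg (rangeSplitting atom) (Subtype.ext h)⟩
      rw [← atom_r x, ← atom_r y, mem_singleton_iff.1 h]
    rw [fiber_eq]
    exact .measurableAtom_of_countable y
  · ext x
    exact ⟨fun h => measurableAtom_subset hE h ((mem_atom_iff _ _).2 (atom_r x).symm),
      fun h => measurableAtom_subset hE h ((mem_atom_iff _ _).2 (atom_r x))⟩

lemma exists_measureExtends {m' : MeasurableSpace Ω} (hm : m ≤ m') (μ : Measure[m] Ω) :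
    ∃ ν : Measure[m'] Ω, MeasureExtends ν μ := by
  obtain ⟨r, hr, hr_preimage⟩ := exists_measurable_top_preimage_eq m
  refine ⟨@Measure.map _ _ m m' r μ, fun E hE => ?_⟩
  rw [Measure.map_apply (hr.mono le_rfl le_top) (hm E hE), hr_preimage E hE]

lemma exists_measureExtends_eqOn_subsets {m' : MeasurableSpace Ω} (hm : m ≤ m')
    {τ : Measure[m] Ω} {σ : Measure[m'] Ω} {S : Set Ω} (hS : MeasurableSet[m] S)
    (hσ : MeasureExtends σ (τ.restrict S)) :
    ∃ τ' : Measure[m'] Ω, MeasureExtends τ' τ ∧ ∀ A ⊆ S, τ' A = σ A := by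
  obtain ⟨ν, hν⟩ := exists_measureExtends hm (τ.restrict Sᶜ)
  refine ⟨σ + ν, fun E hE => ?_, fun A hA => ?_⟩
  · rw [Measure.add_apply, hσ E hE, hν E hE, ← Measure.add_apply,
      Measure.restrict_add_restrict_compl hS]
  · have hνS : ν S = 0 := by
      rw [hν S hS, Measure.restrict_apply hS, inter_compl_self, measure_empty]
    rw [Measure.add_apply, measure_mono_null hA hνS, add_zero]

end CountableSpace

lemma MeasureExtends.trans {Ω : Type*} {m₀ m₁ m₂ : MeasurableSpace Ω} {μ₀ : Measure[m₀] Ω}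
    {μ₁ : Measure[m₁] Ω} {μ₂ : Measure[m₂] Ω} (h₂ : MeasureExtends μ₂ μ₁)
    (h₁ : MeasureExtends μ₁ μ₀) (hm : m₀ ≤ m₁) : MeasureExtends μ₂ μ₀ :=
  fun E hE => (h₂ E (hm E hE)).trans (h₁ E hE)

lemma MeasureExtends.isProbabilityMeasure {Ω : Type*} {m m' : MeasurableSpace Ω}
    {ρ : Measure[m'] Ω} {π : Measure[m] Ω} (h : MeasureExtends ρ π) [IsProbabilityMeasure π] :
    IsProbabilityMeasure ρ :=
  ⟨(h univ .univ).trans measure_univ⟩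

namespace IsSupportConditional

variable {Ω : Type*} {m m' : MeasurableSpace Ω} {π : Measure[m] Ω} {ρ : Measure[m'] Ω}

lemma congr_subsets {m'' : MeasurableSpace Ω} {τ : Measure[m''] Ω}
    (hρ : IsSupportConditional ρ π) (hτ : ∀ A ⊆ spt m π, τ A = ρ A) :
    IsSupportConditional τ π := by
  refine ⟨(hτ _ Subset.rfl).symm ▸ hρ.1, fun E hE => ?_⟩
  rw [hτ _ Subset.rfl, hτ _ inter_subset_right, hρ.2 E hE]

lemma const_smul (hρ : IsSupportConditional ρ π) {c : ℝ≥0∞} (hc₀ : c ≠ 0) (hc : c ≠ ∞) :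
    IsSupportConditional (c • ρ) π := by
  refine ⟨ENNReal.mul_pos hc₀ hρ.1.ne', fun E hE => ?_⟩
  rw [Measure.smul_apply, Measure.smul_apply, smul_eq_mul, smul_eq_mul,
    ENNReal.mul_div_mul_left _ _ hc₀ hc, hρ.2 E hE]

lemma apply_eq_one [IsFiniteMeasure ρ] (hρ : IsSupportConditional ρ π) {E : Set Ω}
    (hE : MeasurableSet[m] E) (hE_inter : ρ (E ∩ spt m π) = ρ (spt m π)) : π E = 1 := by
  rw [hρ.2 E hE, hE_inter, ENNReal.div_self hρ.1.ne' (measure_ne_top ρ _)]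

lemma spt_subset [IsFiniteMeasure ρ] (hρ : IsSupportConditional ρ π) {S : Set Ω}
    (hS : MeasurableSet[m] S) (hρS : ρ Sᶜ = 0) : spt m π ⊆ S := by
  refine sInter_subset_of_mem ⟨hS, hρ.apply_eq_one hS ?_⟩
  rw [inter_comm, measure_inter_conull hρS]

variable [Countable Ω]

lemma of_measureExtends {m'' : MeasurableSpace Ω} {τ : Measure[m''] Ω}
    (hρ : IsSupportConditional ρ π) (hm : m ≤ m') (hτ : MeasureExtends τ ρ) :
    IsSupportConditional τ π := by
  have hS : MeasurableSet[m] (spt m π) := measurableSet_spt π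
  refine ⟨(hτ _ (hm _ hS)).symm ▸ hρ.1, fun E hE => ?_⟩
  rw [hτ _ (hm _ hS), hτ _ (hm _ (hE.inter hS)), hρ.2 E hE]

lemma self (π : Measure[m] Ω) [IsProbabilityMeasure π] : IsSupportConditional π π := by
  have hS_compl : π (spt m π)ᶜ = 0 := ae_mem_spt π
  have hS : π (spt m π) = 1 := (prob_compl_eq_zero_iff (measurableSet_spt π)).1 hS_compl
  refine ⟨hS ▸ one_pos, fun E _ => ?_⟩
  rw [hS, div_one, measure_inter_conull hS_compl]

lemma exists_measureExtends_of_extendedBayesianism (hm : m ≤ m') {τ : Measure[m] Ω}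
    [IsFiniteMeasure τ] (hτ : IsSupportConditional τ π) {π' : Measure[m'] Ω}
    (hEB : ExtendedBayesianism m m' π π') (hpos : 0 < outerM m π (spt m' π')) :
    ∃ τ' : Measure[m'] Ω, MeasureExtends τ' τ ∧ IsSupportConditional τ' π' := by
  obtain ⟨ρ, _, hρ_ext, hρ_cond⟩ := hEB
  replace hρ_cond : IsSupportConditional ρ π' := hρ_cond hpos
  set S := spt m π
  have hS : MeasurableSet[m] S := measurableSet_spt π
  have hτS : τ S ≠ ∞ := measure_ne_top τ S
  have hρ_compl : ρ Sᶜ = 0 := by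
    rw [prob_compl_eq_zero_iff (hm S hS), hρ_ext S hS]
    exact hτ.apply_eq_one hS (by rw [inter_self])
  have hsub : spt m' π' ⊆ S := hρ_cond.spt_subset (hm S hS) hρ_compl
  have hσ : MeasureExtends (τ S • ρ) (τ.restrict S) := fun E hE => by
    rw [Measure.smul_apply, smul_eq_mul, hρ_ext E hE, hτ.2 E hE,
      ENNReal.mul_div_cancel hτ.1.ne' hτS, Measure.restrict_apply hE]
  obtain ⟨τ', hτ'_ext, hτ'_eq⟩ := exists_measureExtends_eqOn_subsets hm hS hσ
  exact ⟨τ', hτ'_ext, (hρ_cond.const_smul hτ.1.ne' hτS).congr_subsets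
    fun A hA => hτ'_eq A (hA.trans hsub)⟩

end IsSupportConditional

theorem exists_measureExtends_isSupportConditional_chain {Ω : Type*} [Countable Ω] {N : ℕ}
    {ms : ℕ → MeasurableSpace Ω} (hmono : MonotoneOn ms (Iic N))
    {π : (n : ℕ) → Measure[ms n] Ω}
    (hEB : ∀ k < N, ExtendedBayesianism (ms k) (ms (k + 1)) (π k) (π (k + 1)))
    (hpos : ∀ k < N, 0 < outerM (ms k) (π k) (spt (ms (k + 1)) (π (k + 1))))
    {n m : ℕ} [IsProbabilityMeasure (π n)] (hnm : n ≤ m) (hmN : m ≤ N) :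
    ∃ πb : Measure[ms m] Ω, IsProbabilityMeasure πb ∧ MeasureExtends πb (π n) ∧
      ∀ k ∈ Icc n m, IsSupportConditional πb (π k) := by
  induction m, hnm using Nat.le_induction with
  | base =>
    refine ⟨π n, inferInstance, fun _ _ => rfl, fun k hk => ?_⟩
    obtain rfl : n = k := le_antisymm hk.1 hk.2
    exact .self (π n)
  | succ m hnm ih =>
    have ms_le {k : ℕ} (hk : k ≤ m) : ms k ≤ ms m :=
      hmono (mem_Iic.2 (by lia)) (mem_Iic.2 (by lia)) hk
    have ms_le_succ : ms m ≤ ms (m + 1) := hmono (mem_Iic.2 (by lia)) hmN m.le_succ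
    obtain ⟨τ, _, hτ_ext, hτ_cond⟩ := ih (by lia)
    obtain ⟨τ', hτ'_ext, hτ'_cond⟩ :=
      (hτ_cond m ⟨hnm, le_rfl⟩).exists_measureExtends_of_extendedBayesianism ms_le_succ
        (hEB m hmN) (hpos m hmN)
    refine ⟨τ', hτ'_ext.isProbabilityMeasure, hτ'_ext.trans hτ_ext (ms_le hnm), fun k hk => ?_⟩
    rcases Nat.le_succ_iff.1 hk.2 with hkm | rfl
    · exact (hτ_cond k ⟨hk.1, hkm⟩).of_measureExtends (ms_le hkm) hτ'_ext
    · exact hτ'_cond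

/-- Theorem 4: for a chain `Σ₀ ⊆ … ⊆ Σ_N` of σ-algebras on a countable
`Ω` with probability measures `πₙ` such that each consecutive pair `(πₙ, πₙ₊₁)` satisfies
extended Bayesianism with `πₙ*(Sₙ₊₁) > 0`, every pair `(πₙ, πₘ)` with `n ≤ m ≤ N`
satisfies extended Bayesianism; moreover there is a single probability measure `π̄` on
`(Ω, Σ_N)` with `π̄ Sₙ > 0` and `πₙ E = π̄ (E ∩ Sₙ) / π̄ Sₙ` for all `E ∈ Σₙ`, `n ≤ N`. -/
theorem repeated_extendedBayesianism {Ω : Type*} [Countable Ω] (N : ℕ)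
    (ms : ℕ → MeasurableSpace Ω)
    (hmono : ∀ n, n < N → ms n ≤ ms (n + 1))
    (π : (n : ℕ) → @Measure Ω (ms n))
    (hprob : ∀ n, n ≤ N → @IsProbabilityMeasure Ω (ms n) (π n))
    (hEB : ∀ n, n < N → ExtendedBayesianism (ms n) (ms (n + 1)) (π n) (π (n + 1)))
    (hpos : ∀ n, n < N → 0 < outerM (ms n) (π n) (spt (ms (n + 1)) (π (n + 1)))) :
    (∀ n m, n ≤ m → m ≤ N → ExtendedBayesianism (ms n) (ms m) (π n) (π m)) ∧
      ∃ πb : @Measure Ω (ms N), @IsProbabilityMeasure Ω (ms N) πb ∧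
        ∀ n, n ≤ N → 0 < πb (spt (ms n) (π n)) ∧
          ∀ E : Set Ω, @MeasurableSet Ω (ms n) E →
            π n E = πb (E ∩ spt (ms n) (π n)) / πb (spt (ms n) (π n)) := by
  have ms_mono : MonotoneOn ms (Iic N) :=
    monotoneOn_of_le_succ ordConnected_Iic fun n _ _ hn => hmono n hn
  constructor
  · intro n m hnm hmN
    have := hprob n (hnm.trans hmN)
    obtain ⟨πb, hπb_prob, hπb_ext, hπb_cond⟩ :=
      exists_measureExtends_isSupportConditional_chain ms_mono hEB hpos hnm hmN
    exact ⟨πb, hπb_prob, hπb_ext, fun _ => hπb_cond m ⟨hnm, le_rfl⟩⟩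
  · have := hprob 0 N.zero_le
    obtain ⟨πb, hπb_prob, -, hπb_cond⟩ :=
      exists_measureExtends_isSupportConditional_chain ms_mono hEB hpos N.zero_le le_rfl
    exact ⟨πb, hπb_prob, fun n hn => hπb_cond n ⟨n.zero_le, hn⟩⟩
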